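/- Let R be a Noetherian ring, M a finitely generated R-module, and I₁, ..., I_t ideals. Then the set ∪_{(n₁,...,n_t) ∈ ℕ^t} Ass(M / I₁^{n₁}⋯I_t^{n_t} M) is finite. -/

import Mathlib

open Submodule

variable {R M : Type*} [CommRing R] [AddCommGroup M] [Module R M]

/-- The saturation `(N :_M J^∞) = ∪ₙ (N :_M Jⁿ)`. -/
def sat (J : Ideal R) (N : Submodule R M) : Submodule R M :=
  ⨆ n : ℕ, ⨅ r ∈ (J ^ n : Ideal R), N.comap (LinearMap.lsmul R M r)

/-- `Jⁿ L ⊓ N ≤ J^(n-k) N` for all `n ≥ k`, i.e. the Artin–Rees number is at most `k`. -/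
def ARle (J : Ideal R) (N L : Submodule R M) (k : ℕ) : Prop :=
  ∀ n, k ≤ n → (J ^ n • L) ⊓ N ≤ J ^ (n - k) • N

/-- The Artin–Rees number `AR(J, N ⊆ L)`. -/
noncomputable def AR (J : Ideal R) (N L : Submodule R M) : ℕ := sInf {k | ARle J N L k}

/-- `N = ⨅ i, Q i` is an irredundant minimal primary decomposition, with `Q i` being
`P i`-primary. -/
def IsMinPD (N : Submodule R M) {s : ℕ} (P : Fin s → Ideal R) (Q : Fin s → Submodule R M) :
    Prop :=
  (∀ i, associatedPrimes R (M ⧸ Q i) = {P i}) ∧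
  Function.Injective P ∧
  N = ⨅ i, Q i ∧
  ∀ i : Fin s, N ≠ ⨅ j ∈ ({i}ᶜ : Set (Fin s)), Q j

/-- `Q` is a `P`-primary component of `N` in `M`: it occurs as the `P`-primary component of
some irredundant minimal primary decomposition of `N` in `M`. -/
def IsPrimaryComponent (N : Submodule R M) (P : Ideal R) (Q : Submodule R M) : Prop :=
  ∃ (s : ℕ) (P' : Fin s → Ideal R) (Q' : Fin s → Submodule R M) (i : Fin s),
    IsMinPD N P' Q' ∧ P' i = P ∧ Q' i = Q

/-!
Let `A = ⨁ₙ Iⁿ tⁿ` be the Rees algebra of `I` and `P = ⨁ₙ Iⁿ M tⁿ`, which is finitely generated over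
the Noetherian ring `A`. The `R`-module `Iⁿ M / K Iⁿ M` is the degree-`n` piece of `P / K P`, so
its associated primes are contractions of associated primes of the single `A`-module `P / K P`,
whatever `n` is. Taking `K = I` and climbing the tower `M ⊇ I M ⊇ I² M ⊇ ⋯` settles the powers of
one ideal. Taking `K` to be a product of powers of the other ideals, and using
`0 → Iⁿ M / K Iⁿ M → M / K Iⁿ M → M / Iⁿ M → 0`, removes one ideal at the cost of replacing `(R, M)`
by `(A, P)`.
-/

theorem associatedPrimes_quotient_eq (N : Submodule R M) :
    associatedPrimes R (M ⧸ N) = N.associatedPrimes := by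
  have colon_mk (x : M) : (⊥ : Submodule R (M ⧸ N)).colon {N.mkQ x} = N.colon {x} := by
    ext r
    rw [mem_colon_singleton, mem_colon_singleton, ← map_smul, mem_bot, mkQ_apply,
      Quotient.mk_eq_zero]
  ext p
  rw [AssociatedPrimes.mem_iff, IsAssociatedPrime, Submodule.isAssociatedPrime_def,
    N.mkQ_surjective.exists, AssociatePrimes.mem_iff, Submodule.isAssociatedPrime_def]
  simp only [colon_mk]

theorem finite_submodule_associatedPrimes [IsNoetherianRing R] [Module.Finite R M]
    (N : Submodule R M) : N.associatedPrimes.Finite :=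
  associatedPrimes_quotient_eq N ▸ associatedPrimes.finite R (M ⧸ N)

theorem associatedPrimes_subset_submoduleOf_union {Y X : Submodule R M} (h : Y ≤ X) :
    Y.associatedPrimes ⊆ (Y.submoduleOf X).associatedPrimes ∪ X.associatedPrimes := by
  simp only [← associatedPrimes_quotient_eq]
  refine associatedPrimes.subset_union_of_exact (f := mapQ _ Y X.subtype le_rfl)
    (g := factor h) ?_ (LinearMap.exact_iff.mpr ?_)
  · rw [← LinearMap.ker_eq_bot, ker_mapQ, ← submoduleOf, mkQ_map_self]
  · rw [factor, ker_mapQ, comap_id, range_mapQ, range_subtype]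

theorem associatedPrimes_comap_subset_image {A L N : Type*} [CommRing A] [IsNoetherianRing A]
    [Algebra R A] [AddCommMonoid L] [Module R L] [AddCommMonoid N] [Module R N] [Module A N]
    [IsScalarTower R A N] (f : L →ₗ[R] N) (Y : Submodule A N) :
    ((Y.restrictScalars R).comap f).associatedPrimes ⊆
      Ideal.comap (algebraMap R A) '' Y.associatedPrimes := by
  rintro p ⟨hp, x, hpx⟩
  have colon_eq : ((Y.restrictScalars R).comap f).colon {x} =
      (Y.colon {f x}).comap (algebraMap R A) := by
    ext r
    simp [mem_colon_singleton]
  have hmin : p ∈ ((Y.colon {f x}).comap (algebraMap R A)).minimalPrimes := by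
    rw [← colon_eq, ← Ideal.radical_minimalPrimes, ← hpx,
      Ideal.minimalPrimes_eq_subsingleton_self, Set.mem_singleton_iff]
  obtain ⟨P, hP, hPp⟩ := Ideal.exists_minimalPrimes_comap_eq _ p hmin
  exact ⟨P, Submodule.isAssociatedPrime_iff.mpr
    ⟨hP.isPrime, exists_eq_colon_of_mem_minimalPrimes hP⟩, hPp⟩

section Filtration

variable {I : Ideal R} (F : I.Filtration M)

/-- The inclusion `x ↦ x tⁿ` of the degree-`n` piece into the Rees module `⨁ₙ (F.N n) tⁿ` of a
filtration, as a map linear only over the base ring `R`. -/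
noncomputable def filtrationSingle (n : ℕ) : F.N n →ₗ[R] F.submodule :=
  ((PolynomialModule.lsingle R n).domRestrict (F.N n)).codRestrict
    (F.submodule.restrictScalars R) fun x i ↦ by
    rw [LinearMap.domRestrict_apply, PolynomialModule.lsingle_apply]
    split_ifs with h
    · exact h ▸ x.2
    · exact zero_mem _

theorem coe_filtrationSingle (n : ℕ) (x : F.N n) :
    (filtrationSingle F n x : PolynomialModule R M) = PolynomialModule.single R n (x : M) :=
  rfl

theorem coeff_mem_smul_of_mem_map_smul_submodule (K : Ideal R) (n : ℕ) {y : PolynomialModule R M}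
    (hy : y ∈ K.map (algebraMap R (reesAlgebra I)) • F.submodule) :
    y.coeff n ∈ K • F.N n := by
  let coeffₙ : PolynomialModule R M →ₗ[R] M :=
    Finsupp.lapply n ∘ₗ (PolynomialModule.coeffLinearEquiv (S := R) R).toLinearMap
  have map_le : (F.submodule.restrictScalars R).map coeffₙ ≤ F.N n :=
    map_le_iff_le_comap.mpr fun _ hz ↦ hz n
  have hy' : y ∈ K • F.submodule.restrictScalars R := by
    rwa [← Ideal.smul_restrictScalars, restrictScalars_mem]
  exact smul_mono_right K map_le (map_smul'' K _ coeffₙ ▸ mem_map_of_mem hy')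

theorem comap_filtrationSingle_map_smul_top (K : Ideal R) (n : ℕ) :
    ((K.map (algebraMap R (reesAlgebra I)) • (⊤ : Submodule (reesAlgebra I)
      F.submodule)).restrictScalars R).comap (filtrationSingle F n) =
      (K • F.N n).submoduleOf (F.N n) := by
  ext x
  rw [mem_comap, restrictScalars_mem, mem_smul_top_iff, submoduleOf, mem_comap, subtype_apply]
  constructor
  · intro hx
    have h := coeff_mem_smul_of_mem_map_smul_submodule F K n hx
    rwa [coe_filtrationSingle, PolynomialModule.coeff_single, Finsupp.single_eq_same] at h
  · intro hx
    rw [← mem_smul_top_iff, ← restrictScalars_mem (S := R), Ideal.smul_restrictScalars,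
      restrictScalars_top]
    exact smul_top_le_comap_smul_top K (filtrationSingle F n) ((mem_smul_top_iff K _ x).mpr hx)

theorem associatedPrimes_smul_submoduleOf_subset_image [IsNoetherianRing R]
    (K : Ideal R) (n : ℕ) :
    ((K • F.N n).submoduleOf (F.N n)).associatedPrimes ⊆
      Ideal.comap (algebraMap R (reesAlgebra I)) ''
        (K.map (algebraMap R (reesAlgebra I)) • (⊤ : Submodule (reesAlgebra I)
          F.submodule)).associatedPrimes := by
  rw [← comap_filtrationSingle_map_smul_top F K n]
  exact associatedPrimes_comap_subset_image (filtrationSingle F n) _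

end Filtration

section ReesModule

/-- The Rees module `⨁ₙ Iⁿ N tⁿ` of `N` along `I`, realised inside `M[t]`. It turns the powers of
`I` into graded pieces of a single finitely generated module. -/
noncomputable abbrev reesModule (I : Ideal R) (N : Submodule R M) :
    Submodule (reesAlgebra I) (PolynomialModule R M) :=
  (I.stableFiltration N).submodule

instance reesModule.instFinite [IsNoetherianRing R] [Module.Finite R M] (I : Ideal R)
    (N : Submodule R M) : Module.Finite (reesAlgebra I) (reesModule I N) :=
  Module.Finite.iff_fg.mpr <| (Ideal.Filtration.submodule_fg_iff_stable _
    fun _ ↦ IsNoetherian.noetherian _).mpr (I.stableFiltration_stable N)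

variable [IsNoetherianRing R] (I K : Ideal R) (N : Submodule R M) (n : ℕ)

theorem associatedPrimes_smul_pow_smul_subset :
    (K • I ^ n • N).associatedPrimes ⊆
      Ideal.comap (algebraMap R (reesAlgebra I)) ''
        (K.map (algebraMap R (reesAlgebra I)) •
          (⊤ : Submodule (reesAlgebra I) (reesModule I N))).associatedPrimes ∪
      (I ^ n • N).associatedPrimes :=
  (associatedPrimes_subset_submoduleOf_union smul_le_right).trans <|
    Set.union_subset_union_left _ <|
      associatedPrimes_smul_submoduleOf_subset_image (I.stableFiltration N) K n

theorem associatedPrimes_pow_smul_subset :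
    (I ^ n • N).associatedPrimes ⊆
      Ideal.comap (algebraMap R (reesAlgebra I)) ''
        (I.map (algebraMap R (reesAlgebra I)) •
          (⊤ : Submodule (reesAlgebra I) (reesModule I N))).associatedPrimes ∪
      N.associatedPrimes := by
  induction n with
  | zero => simp
  | succ n ih =>
    rw [pow_succ', mul_smul]
    exact (associatedPrimes_smul_pow_smul_subset I I N n).trans
      (Set.union_subset Set.subset_union_left ih)

end ReesModule

/-- The set `⋃ₙ Ass(M / I₁^{n₁}⋯I_t^{n_t} M)` over all multi-exponents is finite. -/
theorem associatedPrimes_multipowers_finite [IsNoetherianRing R] [Module.Finite R M]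
    (t : ℕ) (I : Fin t → Ideal R) :
    (⋃ n : Fin t → ℕ,
      associatedPrimes R (M ⧸ ((∏ i, I i ^ n i) • ⊤ : Submodule R M))).Finite := by
  simp only [associatedPrimes_quotient_eq]
  induction t generalizing R M with
  | zero => exact Set.finite_iUnion fun _ ↦ finite_submodule_associatedPrimes _
  | succ t ih =>
    let φ := algebraMap R (reesAlgebra (I 0))
    let P := reesModule (I 0) (⊤ : Submodule R M)
    have tail_finite := ih (R := reesAlgebra (I 0)) (M := P) fun i ↦ (I i.succ).map φ
    have head_finite := finite_submodule_associatedPrimes (R := reesAlgebra (I 0)) (M := P)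
      ((I 0).map φ • ⊤)
    have top_finite := finite_submodule_associatedPrimes (⊤ : Submodule R M)
    refine ((tail_finite.image (Ideal.comap φ)).union
      ((head_finite.image (Ideal.comap φ)).union top_finite)).subset
        (Set.iUnion_subset fun n ↦ ?_)
    have map_tail : (∏ i : Fin t, I i.succ ^ n i.succ).map φ =
        ∏ i : Fin t, (I i.succ).map φ ^ n i.succ := by
      simp only [← Ideal.mapHom_apply, map_prod, map_pow]
    rw [Fin.prod_univ_succ, mul_comm, mul_smul]
    refine (associatedPrimes_smul_pow_smul_subset (I 0) _ ⊤ (n 0)).trans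
      (Set.union_subset_union (Set.image_mono ?_) (associatedPrimes_pow_smul_subset (I 0) ⊤ (n 0)))
    rw [map_tail]
    exact Set.subset_iUnion_of_subset (fun i ↦ n i.succ) subset_rfl
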